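/- arXiv:1105.5022 — 8 statements merged into one kernel-verified Lean document; each statement's English description precedes it below -/
import Mathlib

section
/- The greatest common divisor with the conductor is an invariant of Deligne–Ribet classes: for nonzero integral ideals a, b, f of O_K, if a ~_f b then a + f = b + f (i.e. gcd(a, f) = gcd(b, f) as ideals). -/
open NumberField FractionalIdeal nonZeroDivisors

/-- An element of a number field is totally positive if every real embedding sends it
to a positive real number. -/
def TotallyPositive (K : Type*) [Field K] (x : K) : Prop :=
  ∀ σ : K →+* ℝ, 0 < σ x

/-- The Deligne–Ribet relation `a ~_f b` on (nonzero) integral ideals of `𝓞 K`: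
there is a totally positive `x ∈ K^×` with `x - 1 ∈ f·b⁻¹` and `(x) = a·b⁻¹`. -/
def DRrel (K : Type*) [Field K] [NumberField K] (f a b : Ideal (𝓞 K)) : Prop :=
  ∃ x : K, x ≠ 0 ∧ TotallyPositive K x ∧
    x - 1 ∈ (f : FractionalIdeal (𝓞 K)⁰ K) * (b : FractionalIdeal (𝓞 K)⁰ K)⁻¹ ∧
    spanSingleton (𝓞 K)⁰ x = (a : FractionalIdeal (𝓞 K)⁰ K) * (b : FractionalIdeal (𝓞 K)⁰ K)⁻¹

/-! If `(x) = a·b⁻¹` and `x - 1 ∈ f·b⁻¹`, then `a = (x)·b` and `(x - 1)·b ⊆ f`. Since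
`(x) + (x - 1) = (1) + (x - 1)`, multiplying by `b` and adding `f`, which absorbs `(x - 1)·b`,
gives `a + f = b + f`. -/

section

variable {R P : Type*} [CommRing R] {S : Submonoid R} [CommRing P] [Algebra R P]
  [IsLocalization S P]

theorem spanSingleton_add_spanSingleton_sub (x y : P) :
    spanSingleton S x + spanSingleton S (x - y) = spanSingleton S y + spanSingleton S (x - y) := by
  apply coeToSubmodule_injective
  simp only [coe_add, coe_spanSingleton, Submodule.add_eq_sup, ← Submodule.span_insert]
  apply le_antisymm <;>
    simp only [Submodule.span_le, Set.pair_subset_iff, SetLike.mem_coe, Submodule.mem_span_pair]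
  · exact ⟨⟨1, 1, by module⟩, ⟨0, 1, by module⟩⟩
  · exact ⟨⟨1, -1, by module⟩, ⟨0, 1, by module⟩⟩

theorem spanSingleton_mul_add_eq_of_sub_mul_le {x y : P} {J F : FractionalIdeal S P}
    (h : spanSingleton S (x - y) * J ≤ F) :
    spanSingleton S x * J + F = spanSingleton S y * J + F := by
  have absorb : spanSingleton S (x - y) * J + F = F := by rwa [← sup_eq_add, sup_eq_right]
  rw [← absorb, ← add_assoc, ← add_assoc, ← add_mul, ← add_mul,
    spanSingleton_add_spanSingleton_sub]

theorem DRrel_sup_conductor_eq_general {I J J' F : FractionalIdeal S P} (hJ : J' * J = 1) {x : P}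
    (hF : x - 1 ∈ F * J') (hI : spanSingleton S x = I * J') :
    I + F = J + F := by
  have sub_mul_le : spanSingleton S (x - 1) * J ≤ F := calc
    _ ≤ F * J' * J := by gcongr; exact spanSingleton_le_iff_mem.mpr hF
    _ = F := by rw [mul_assoc, hJ, mul_one]
  have mul_eq : spanSingleton S x * J = I := by rw [hI, mul_assoc, hJ, mul_one]
  simpa only [mul_eq, spanSingleton_one, one_mul] using
    spanSingleton_mul_add_eq_of_sub_mul_le sub_mul_le

end

/-- **Statement 5.** The gcd with the conductor is an invariant of Deligne–Ribet
classes: if `a ~_f b` then `a + f = b + f` (i.e. `gcd(a,f) = gcd(b,f)` as ideals). -/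
theorem DRrel_sup_conductor_eq (K : Type*) [Field K] [NumberField K]
    (a b f : Ideal (𝓞 K)) (ha : a ≠ 0) (hb : b ≠ 0) (hf : f ≠ 0)
    (h : DRrel K f a b) :
    a + f = b + f := by
  obtain ⟨x, -, -, hF, hI⟩ := h
  simpa only [Submodule.add_eq_sup, ← coeIdeal_sup, coeIdeal_inj] using
    DRrel_sup_conductor_eq_general (inv_mul_cancel₀ (coeIdeal_ne_zero.mpr hb)) hF hI
end

section
/- Let d and f be nonzero integral ideals of O_K with d dividing f. If c and b are nonzero integral ideals with c ~_f d·b, then d divides c. Consequently, the (injective) map DR_{f/d} → DR_f sending the class of b to the class of d·b has image exactly the set of ~_f-classes of ideals divisible by d. -/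
open NumberField FractionalIdeal nonZeroDivisors

/-! If `c ~_f d·b` via `x`, then both `1` and `x - 1` lie in `b⁻¹`: the former because `b` is
integral, the latter because `d ∣ f` is equivalent to `f·(d·b)⁻¹ ⊆ b⁻¹`. Hence `x ∈ b⁻¹`, that is,
`c·(d·b)⁻¹ ⊆ b⁻¹`, and the same equivalence with `c` in place of `f` gives `d ∣ c`. -/

theorem mul_inv_mul_le_inv_iff {G₀ : Type*} [CommGroupWithZero G₀] [PartialOrder G₀]
    [PosMulReflectLT G₀] {x y z : G₀} (hy : 0 < y) (hz : 0 < z) :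
    x * (y * z)⁻¹ ≤ z⁻¹ ↔ x ≤ y := by
  have := PosMulReflectLT.toPosMulStrictMono G₀
  rw [mul_inv_le_iff₀' (mul_pos hy hz), mul_inv_cancel_right₀ hz.ne']

section DedekindDomain

variable {R K : Type*} [CommRing R] [IsDedekindDomain R] [Field K] [Algebra R K]
  [IsFractionRing R K]

variable (K) in
theorem coeIdeal_mul_inv_mul_le_inv_iff_dvd {a d b : Ideal R} (hd : d ≠ 0) (hb : b ≠ 0) :
    (a : FractionalIdeal R⁰ K) * ((d * b : Ideal R) : FractionalIdeal R⁰ K)⁻¹ ≤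
      (b : FractionalIdeal R⁰ K)⁻¹ ↔ d ∣ a := by
  rw [coeIdeal_mul, mul_inv_mul_le_inv_iff (pos_iff_ne_zero.mpr (coeIdeal_ne_zero.mpr hd))
    (pos_iff_ne_zero.mpr (coeIdeal_ne_zero.mpr hb)), coeIdeal_le_coeIdeal, Ideal.dvd_iff_le]

theorem mem_inv_coeIdeal_of_sub_one_mem {b : Ideal R} (hb : b ≠ 0) {x : K}
    (hx : x - 1 ∈ (b : FractionalIdeal R⁰ K)⁻¹) : x ∈ (b : FractionalIdeal R⁰ K)⁻¹ :=
  (Submodule.sub_mem_iff_left (b : FractionalIdeal R⁰ K)⁻¹.coeToSubmodule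
    (FractionalIdeal.one_mem_inv_coe_ideal hb)).mp hx

/-- The Deligne–Ribet relation over a Dedekind domain `R` with fraction field `K`, with an
arbitrary set `S` in place of the totally positive elements of `K^×`: there is `x ∈ S` with
`x - 1 ∈ f·b⁻¹` and `(x) = a·b⁻¹`. -/
def DRrelOn (S : Set K) (f a b : Ideal R) : Prop :=
  ∃ x ∈ S, x - 1 ∈ (f : FractionalIdeal R⁰ K) * (b : FractionalIdeal R⁰ K)⁻¹ ∧
    spanSingleton R⁰ x = (a : FractionalIdeal R⁰ K) * (b : FractionalIdeal R⁰ K)⁻¹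

namespace DRrelOn

variable {S : Set K} {d f a b c : Ideal R}

theorem refl (hS : 1 ∈ S) (ha : a ≠ 0) : DRrelOn S f a a := by
  refine ⟨1, hS, ?_, ?_⟩
  · rw [sub_self]
    exact zero_mem _
  · rw [mul_inv_cancel₀ (coeIdeal_ne_zero.mpr ha), spanSingleton_one]

theorem dvd_of_mul_right (hd : d ≠ 0) (hb : b ≠ 0) (hdf : d ∣ f) (h : DRrelOn S f c (d * b)) :
    d ∣ c := by
  obtain ⟨x, -, hx_sub, hx_span⟩ := h
  have hx_mem : x ∈ (b : FractionalIdeal R⁰ K)⁻¹ :=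
    mem_inv_coeIdeal_of_sub_one_mem hb
      ((coeIdeal_mul_inv_mul_le_inv_iff_dvd K hd hb).mpr hdf hx_sub)
  rwa [← coeIdeal_mul_inv_mul_le_inv_iff_dvd K hd hb, ← hx_span, spanSingleton_le_iff_mem]

end DRrelOn

theorem DRrel_dvd_of_rel_mul_general {S : Set K} (hS : 1 ∈ S) {d f : Ideal R} (hd : d ≠ 0)
    (hdf : d ∣ f) :
    (∀ c b : Ideal R, b ≠ 0 → DRrelOn S f c (d * b) → d ∣ c) ∧
    (∀ c : Ideal R, c ≠ 0 → ((∃ b : Ideal R, b ≠ 0 ∧ DRrelOn S f c (d * b)) ↔ d ∣ c)) := by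
  refine ⟨fun c b hb h => h.dvd_of_mul_right hd hb hdf, fun c hc => ⟨?_, ?_⟩⟩
  · rintro ⟨b, hb, h⟩
    exact h.dvd_of_mul_right hd hb hdf
  · rintro ⟨b, rfl⟩
    exact ⟨b, right_ne_zero_of_mul hc, .refl hS hc⟩

end DedekindDomain

theorem TotallyPositive.one (K : Type*) [Field K] : TotallyPositive K 1 := fun σ => by
  rw [map_one]
  exact one_pos

theorem DRrel_iff_DRrelOn {K : Type*} [Field K] [NumberField K] {f a b : Ideal (𝓞 K)} :
    DRrel K f a b ↔ DRrelOn {x : K | x ≠ 0 ∧ TotallyPositive K x} f a b := by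
  simp only [DRrel, DRrelOn, Set.mem_ofPred_eq, and_assoc]

/-- **Statement 6.** Let `d ∣ f` be nonzero integral ideals. If `c ~_f d·b` then `d ∣ c`.
Consequently the class `[c]_f` lies in the image of the (injective) map
`DR_{f/d} → DR_f`, `[b] ↦ [d·b]`, exactly when `d` divides `c`. -/
theorem DRrel_dvd_of_rel_mul (K : Type*) [Field K] [NumberField K]
    (d f : Ideal (𝓞 K)) (hd : d ≠ 0) (hf : f ≠ 0) (hdf : d ∣ f) :
    (∀ c b : Ideal (𝓞 K), c ≠ 0 → b ≠ 0 → DRrel K f c (d * b) → d ∣ c) ∧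
    (∀ c : Ideal (𝓞 K), c ≠ 0 →
      ((∃ b : Ideal (𝓞 K), b ≠ 0 ∧ DRrel K f c (d * b)) ↔ d ∣ c)) := by
  simp only [DRrel_iff_DRrelOn]
  have h := DRrel_dvd_of_rel_mul_general (S := {x : K | x ≠ 0 ∧ TotallyPositive K x})
    ⟨one_ne_zero, .one K⟩ hd hdf
  exact ⟨fun c b _ => h.1 c b, h.2⟩
end

section
/- Let d, e, f be nonzero integral ideals of O_K with d and e both dividing f, and let c be a nonzero integral ideal. Then there exist nonzero integral ideals a and b with c ~_f d·a and c ~_f e·b if and only if there exists a nonzero integral ideal g with c ~_f lcm(d,e)·g, where lcm(d,e) = d ∩ e is the least common multiple of the ideals d and e. -/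
open NumberField FractionalIdeal nonZeroDivisors

/-!
The ideal `f ⊔ a = gcd(f, a)` depends only on the class of `a` modulo `~_f`: if `(x) = a·b⁻¹`
and `x ≡ 1` modulo `f·b⁻¹`, then `f·b⁻¹ + (x) = f·b⁻¹ + (1)`, and multiplying by `b` gives
`f + a = f + b`. So divisibility by a divisor `d` of `f` is also an invariant of the class, and
since `c ~_f c`, the class of `c ≠ 0` contains a multiple of `d` exactly when `d ∣ c`. The theorem
thus amounts to the universal property of the least common multiple.
-/

theorem add_spanSingleton_le_of_sub_mem {R P : Type*} [CommRing R] [CommRing P] [Algebra R P]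
    {S : Submonoid R} [IsLocalization S P] {I : FractionalIdeal S P} {x y : P} (h : x - y ∈ I) :
    I + spanSingleton S x ≤ I + spanSingleton S y := by
  have hx : x ∈ I ⊔ spanSingleton S y := by
    rw [sup_eq_add, mem_add]
    exact ⟨x - y, h, y, mem_spanSingleton_self S y, sub_add_cancel x y⟩
  simpa only [sup_eq_add] using sup_le le_sup_left (spanSingleton_le_iff_mem.2 hx)

theorem add_spanSingleton_eq_of_sub_mem {R P : Type*} [CommRing R] [CommRing P] [Algebra R P]
    {S : Submonoid R} [IsLocalization S P] {I : FractionalIdeal S P} {x y : P} (h : x - y ∈ I) :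
    I + spanSingleton S x = I + spanSingleton S y :=
  le_antisymm (add_spanSingleton_le_of_sub_mem h)
    (add_spanSingleton_le_of_sub_mem (neg_sub x y ▸ Submodule.neg_mem (I : Submodule R P) h))

section DedekindDomain

variable {R : Type*} [CommRing R] [IsDedekindDomain R]

theorem sup_eq_sup_of_sub_one_mem {K : Type*} [Field K] [Algebra R K] [IsFractionRing R K]
    {f a b : Ideal R} {x : K} (hb : b ≠ 0)
    (hx : x - 1 ∈ (f : FractionalIdeal R⁰ K) * (b : FractionalIdeal R⁰ K)⁻¹)
    (hxab : spanSingleton R⁰ x = (a : FractionalIdeal R⁰ K) * (b : FractionalIdeal R⁰ K)⁻¹) :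
    f ⊔ a = f ⊔ b := by
  have hb' : (b : FractionalIdeal R⁰ K) ≠ 0 := coeIdeal_ne_zero.2 hb
  have h : (f * (b : FractionalIdeal R⁰ K)⁻¹ + a * (b : FractionalIdeal R⁰ K)⁻¹) * b =
      (f * (b : FractionalIdeal R⁰ K)⁻¹ + 1) * b := by
    rw [← hxab, add_spanSingleton_eq_of_sub_mem hx, spanSingleton_one]
  apply coeIdeal_injective (K := K)
  simpa only [add_mul, inv_mul_cancel_right₀ hb', one_mul, coeIdeal_sup] using h

theorem ideal_inf_dvd_iff {d e c : Ideal R} : d ⊓ e ∣ c ↔ d ∣ c ∧ e ∣ c := by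
  simp only [Ideal.dvd_iff_le, le_inf_iff]

end DedekindDomain

namespace DRrel

variable {K : Type*} [Field K] [NumberField K] {a b c d f : Ideal (𝓞 K)}

theorem refl (hc : c ≠ 0) : DRrel K f c c := by
  refine ⟨1, one_ne_zero, fun σ => by simp only [map_one, zero_lt_one], ?_, ?_⟩
  · simpa only [sub_self] using FractionalIdeal.zero_mem _
  · rw [spanSingleton_one, mul_inv_cancel₀ (coeIdeal_ne_zero.2 hc)]

-- For `b = 0` the convention `0⁻¹ = 0` would force `(x) = 0`.
theorem right_ne_zero (h : DRrel K f a b) : b ≠ 0 := by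
  intro hb
  obtain ⟨x, hx, -, -, hxab⟩ := h
  rw [coeIdeal_eq_zero.2 hb, inv_zero, mul_zero, spanSingleton_eq_zero_iff] at hxab
  exact hx hxab

theorem sup_eq (h : DRrel K f a b) : f ⊔ a = f ⊔ b := by
  have ⟨x, _, _, hx, hxab⟩ := h
  exact sup_eq_sup_of_sub_one_mem h.right_ne_zero hx hxab

theorem dvd_iff (h : DRrel K f a b) (hdf : d ∣ f) : d ∣ a ↔ d ∣ b := by
  rw [Ideal.dvd_iff_le] at hdf
  have hsup (I : Ideal (𝓞 K)) : d ∣ I ↔ f ⊔ I ≤ d := by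
    rw [sup_le_iff, Ideal.dvd_iff_le, and_iff_right hdf]
  rw [hsup, hsup, h.sup_eq]

theorem exists_mul_iff_dvd (hc : c ≠ 0) (hdf : d ∣ f) :
    (∃ a : Ideal (𝓞 K), a ≠ 0 ∧ DRrel K f c (d * a)) ↔ d ∣ c := by
  constructor
  · rintro ⟨a, -, h⟩
    exact (h.dvd_iff hdf).2 (dvd_mul_right d a)
  · rintro ⟨a, rfl⟩
    exact ⟨a, right_ne_zero_of_mul hc, .refl hc⟩

end DRrel

/-- **Statement 7.** For nonzero integral ideals `d, e ∣ f` and nonzero `c`: there are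
nonzero `a, b` with `c ~_f d·a` and `c ~_f e·b` iff there is a nonzero `g` with
`c ~_f lcm(d,e)·g`, where `lcm(d,e) = d ∩ e`. -/
theorem DRrel_lcm_iff (K : Type*) [Field K] [NumberField K]
    (d e f c : Ideal (𝓞 K)) (hd : d ≠ 0) (he : e ≠ 0) (hf : f ≠ 0) (hc : c ≠ 0)
    (hdf : d ∣ f) (hef : e ∣ f) :
    (∃ a b : Ideal (𝓞 K), a ≠ 0 ∧ b ≠ 0 ∧ DRrel K f c (d * a) ∧ DRrel K f c (e * b)) ↔
    (∃ g : Ideal (𝓞 K), g ≠ 0 ∧ DRrel K f c ((d ⊓ e) * g)) :=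
  calc
    _ ↔ (∃ a : Ideal (𝓞 K), a ≠ 0 ∧ DRrel K f c (d * a)) ∧
        (∃ b : Ideal (𝓞 K), b ≠ 0 ∧ DRrel K f c (e * b)) :=
      ⟨fun ⟨a, b, ha, hb, hda, heb⟩ => ⟨⟨a, ha, hda⟩, ⟨b, hb, heb⟩⟩,
        fun ⟨⟨a, ha, hda⟩, ⟨b, hb, heb⟩⟩ => ⟨a, b, ha, hb, hda, heb⟩⟩
    _ ↔ d ∣ c ∧ e ∣ c :=
      and_congr (DRrel.exists_mul_iff_dvd hc hdf) (DRrel.exists_mul_iff_dvd hc hef)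
    _ ↔ d ⊓ e ∣ c := ideal_inf_dvd_iff.symm
    _ ↔ _ := (DRrel.exists_mul_iff_dvd hc (ideal_inf_dvd_iff.2 ⟨hdf, hef⟩)).symm
end

section
/- For a nonzero integral ideal f of O_K and a nonzero integral ideal a, the class [a]_f is an invertible element of the monoid DR_f (i.e. there exists a nonzero integral ideal b with a·b ~_f O_K) if and only if a is coprime to f, i.e. a + f = O_K. -/
open NumberField FractionalIdeal nonZeroDivisors

/-!
Integral ideals satisfy `c ~_f 1` exactly when `c` is generated by a totally positive integer
congruent to `1` modulo `f`. As containment of ideals is divisibility, `[a]_f` is thus invertible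
if and only if `a` contains a nonzero totally positive element congruent to `1` modulo `f`.
Coprimality provides such an element up to the sign conditions, and squaring it meets those.
-/

theorem totallyPositive_sq {K : Type*} [Field K] {x : K} (hx : x ≠ 0) :
    TotallyPositive K (x ^ 2) := by
  intro σ
  rw [map_pow]
  exact sq_pos_of_ne_zero ((map_ne_zero σ).2 hx)

section Ideal

variable {R : Type*} [CommRing R] {I J : Ideal R}

theorem isCoprime_of_mem_of_sub_one_mem {y : R} (hyI : y ∈ I) (hyJ : y - 1 ∈ J) :
    IsCoprime I J :=
  Ideal.isCoprime_iff_exists.2 ⟨y, hyI, 1 - y, sub_mem_comm_iff.1 hyJ, add_sub_cancel y 1⟩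

theorem exists_ne_zero_mem_sub_one_mem_of_isCoprime (hI : I ≠ ⊥) (hIJ : IsCoprime I J) :
    ∃ y ≠ 0, y ∈ I ∧ y - 1 ∈ J := by
  -- For `J = ⊤` the congruence is void, and a Bézout element of `I` may be `0`.
  rcases eq_or_ne J ⊤ with rfl | hJ
  · obtain ⟨y, hyI, hy⟩ := Submodule.exists_mem_ne_zero_of_ne_bot hI
    exact ⟨y, hy, hyI, Submodule.mem_top⟩
  · obtain ⟨y, hyI, z, hzJ, hyz⟩ := Ideal.isCoprime_iff_exists.1 hIJ
    refine ⟨y, ?_, hyI, ?_⟩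
    · rintro rfl
      rw [zero_add] at hyz
      exact hJ ((Ideal.eq_top_iff_one J).2 (hyz ▸ hzJ))
    · rw [sub_mem_comm_iff, ← hyz, add_sub_cancel_left]
      exact hzJ

theorem pow_sub_one_mem {y : R} (hy : y - 1 ∈ J) (n : ℕ) : y ^ n - 1 ∈ J :=
  J.mem_of_dvd (sub_one_dvd_pow_sub_one y n) hy

theorem algebraMap_mem_coeIdeal_iff {P : Type*} [CommRing P] [Algebra R P] [FaithfulSMul R P]
    {S : Submonoid R} {x : R} : algebraMap R P x ∈ (I : FractionalIdeal S P) ↔ x ∈ I := by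
  simp only [mem_coeIdeal, (FaithfulSMul.algebraMap_injective R P).eq_iff, exists_eq_right]

end Ideal

section NumberField

variable {K : Type*} [Field K] [NumberField K] {f a : Ideal (𝓞 K)}

theorem DRrel_one_right_iff :
    DRrel K f a 1 ↔
      ∃ y : 𝓞 K, y ≠ 0 ∧ TotallyPositive K (algebraMap (𝓞 K) K y) ∧ y - 1 ∈ f ∧
        Ideal.span {y} = a := by
  simp only [DRrel, Ideal.one_eq_top, coeIdeal_top, inv_one, mul_one]
  have sub_one_mem_iff (y : 𝓞 K) :
      algebraMap (𝓞 K) K y - 1 ∈ (f : FractionalIdeal (𝓞 K)⁰ K) ↔ y - 1 ∈ f := by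
    rw [← algebraMap_mem_coeIdeal_iff (P := K), map_sub, map_one]
  have span_eq_iff (y : 𝓞 K) :
      spanSingleton (𝓞 K)⁰ (algebraMap (𝓞 K) K y) = (a : FractionalIdeal (𝓞 K)⁰ K) ↔
        Ideal.span {y} = a := by
    rw [← coeIdeal_span_singleton, coeIdeal_inj]
  constructor
  · rintro ⟨x, hx, hpos, hxf, hxa⟩
    obtain ⟨y, -, rfl⟩ := (mem_coeIdeal _).1 (hxa ▸ mem_spanSingleton_self _ x)
    exact ⟨y, RingOfIntegers.coe_ne_zero_iff.1 hx, hpos, (sub_one_mem_iff y).1 hxf,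
      (span_eq_iff y).1 hxa⟩
  · rintro ⟨y, hy, hpos, hyf, hya⟩
    exact ⟨algebraMap (𝓞 K) K y, RingOfIntegers.coe_ne_zero_iff.2 hy, hpos,
      (sub_one_mem_iff y).2 hyf, (span_eq_iff y).2 hya⟩

theorem exists_DRrel_mul_one_iff :
    (∃ b : Ideal (𝓞 K), b ≠ 0 ∧ DRrel K f (a * b) 1) ↔
      ∃ y : 𝓞 K, y ≠ 0 ∧ TotallyPositive K (algebraMap (𝓞 K) K y) ∧ y - 1 ∈ f ∧ y ∈ a := by
  simp only [DRrel_one_right_iff]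
  constructor
  · rintro ⟨b, -, y, hy, hpos, hyf, hyab⟩
    exact ⟨y, hy, hpos, hyf, Ideal.dvd_span_singleton.1 ⟨b, hyab⟩⟩
  · rintro ⟨y, hy, hpos, hyf, hya⟩
    obtain ⟨b, hyab⟩ := Ideal.dvd_span_singleton.2 hya
    refine ⟨b, ?_, y, hy, hpos, hyf, hyab⟩
    rintro rfl
    rw [mul_zero, Ideal.zero_eq_bot, Ideal.span_singleton_eq_bot] at hyab
    exact hy hyab

end NumberField

/-- **Statement 8.** For nonzero integral ideals `a, f` of `𝓞 K`, the class `[a]_f` is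
invertible in the monoid `DR_f` (i.e. there is a nonzero integral ideal `b` with
`a·b ~_f 𝓞 K`) if and only if `a` is coprime to `f`, i.e. `a + f = 𝓞 K`. -/
theorem DRrel_isUnit_iff_coprime (K : Type*) [Field K] [NumberField K]
    (a f : Ideal (𝓞 K)) (ha : a ≠ 0) (hf : f ≠ 0) :
    (∃ b : Ideal (𝓞 K), b ≠ 0 ∧ DRrel K f (a * b) 1) ↔ a + f = 1 := by
  rw [exists_DRrel_mul_one_iff, ← Ideal.isCoprime_iff_add]
  constructor
  · rintro ⟨y, -, -, hyf, hya⟩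
    exact isCoprime_of_mem_of_sub_one_mem hya hyf
  · intro haf
    obtain ⟨y, hy, hya, hyf⟩ := exists_ne_zero_mem_sub_one_mem_of_isCoprime ha haf
    refine ⟨y ^ 2, pow_ne_zero 2 hy, ?_, pow_sub_one_mem hyf 2, a.pow_mem_of_mem hya 2 two_pos⟩
    rw [map_pow]
    exact totallyPositive_sq (RingOfIntegers.coe_ne_zero_iff.2 hy)
end

section
/- Let a and f be nonzero integral ideals of O_K that are coprime, i.e. a + f = O_K. Then there exists a totally positive element x ∈ a with x − 1 ∈ f. -/
open NumberField FractionalIdeal nonZeroDivisors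

section

variable {R : Type*} [CommRing R] {a f : Ideal R}

theorem exists_mem_ne_zero_sub_one_mem_of_isCoprime (ha : a ≠ ⊥) (hco : IsCoprime a f) :
    ∃ y ∈ a, y ≠ 0 ∧ y - 1 ∈ f := by
  obtain ⟨y, hya, z, hzf, hyz⟩ := Ideal.isCoprime_iff_exists.mp hco
  have hyf : y - 1 ∈ f := by
    rw [← hyz, sub_add_cancel_left]
    exact f.neg_mem hzf
  by_cases hy : y = 0
  · have hf : f = ⊤ := by
      rwa [hy, zero_sub, neg_mem_iff, ← Ideal.eq_top_iff_one] at hyf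
    obtain ⟨w, hwa, hw⟩ := Submodule.exists_mem_ne_zero_of_ne_bot ha
    exact ⟨w, hwa, hw, hf ▸ Submodule.mem_top⟩
  · exact ⟨y, hya, hy, hyf⟩

theorem exists_totallyPositive_mem_coprime_general (K : Type*) [Field K] [Algebra R K]
    [FaithfulSMul R K] (ha : a ≠ ⊥) (hco : IsCoprime a f) :
    ∃ x ∈ a, TotallyPositive K (algebraMap R K x) ∧ x - 1 ∈ f := by
  obtain ⟨y, hya, hy, hyf⟩ := exists_mem_ne_zero_sub_one_mem_of_isCoprime ha hco
  have hyK : algebraMap R K y ≠ 0 :=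
    (map_ne_zero_iff _ (FaithfulSMul.algebraMap_injective R K)).mpr hy
  refine ⟨y ^ 2, Ideal.pow_mem_of_mem a hya 2 two_pos, ?_, ?_⟩
  · rw [map_pow]
    exact totallyPositive_sq hyK
  · exact f.mem_of_dvd (by simpa only [one_pow] using sub_dvd_pow_sub_pow y 1 2) hyf

end

open NumberField in
/-- **Statement 14.** If `a` and `f` are nonzero coprime integral ideals of `𝓞 K`
(i.e. `a + f = 𝓞 K`), then there is a totally positive `x ∈ a` with `x - 1 ∈ f`. -/
theorem exists_totallyPositive_mem_coprime (K : Type*) [Field K] [NumberField K]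
    (a f : Ideal (𝓞 K)) (ha : a ≠ 0) (hf : f ≠ 0) (hco : a + f = 1) :
    ∃ x : 𝓞 K, x ∈ a ∧ TotallyPositive K (algebraMap (𝓞 K) K x) ∧ x - 1 ∈ f :=
  exists_totallyPositive_mem_coprime_general K ha (Ideal.isCoprime_iff_add.mpr hco)
end

section
/- Euler's formula for number fields: for every nonzero integral ideal f of O_K, the absolute norm satisfies N(f) = |O_K/f| = Σ_{d | f} φ_K(d), where the sum ranges over all (finitely many) nonzero integral ideals d dividing f and φ_K(d) = |(O_K/d)^×| is the number of units of the quotient ring O_K/d. -/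
open NumberField

/-!
Sort the elements `x` of `R ⧸ f` by their annihilator. In a Dedekind domain a submodule
`N = e / f` of `R ⧸ f` satisfies `ann N * e = f`, so by unique factorization `N` is determined by
its annihilator; and every `e / f` is cyclic, because `e = f + (y)` for some `y`. Hence the
annihilators that occur are exactly the divisors `d` of `f`, and the elements with annihilator `d`
are the generators of a single cyclic module isomorphic to `R ⧸ d`, which correspond to the units
of `R ⧸ d`.
-/

theorem natCard_eq_finsum_ncard_fiber {α β : Type*} [Finite α] (g : α → β) :
    Nat.card α = ∑ᶠ b ∈ Set.range g, (g ⁻¹' {b}).ncard := by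
  rw [← Set.ncard_univ, ← (Set.finite_range g).ncard_biUnion (fun _ _ ↦ Set.toFinite _)
    fun _ _ _ _ hne ↦ Disjoint.preimage g (Set.disjoint_singleton.2 hne), Set.biUnion_range,
    ← Set.preimage_iUnion, Set.iUnion_singleton_eq_range, Set.preimage_range]

section CyclicModule

variable {R M : Type*} [CommRing R] [AddCommGroup M] [Module R M]

theorem span_singleton_quotient_eq_top_iff {I : Ideal R} {z : R ⧸ I} :
    Submodule.span R {z} = ⊤ ↔ IsUnit z := by
  rw [← Submodule.restrictScalars_span R (R ⧸ I) Ideal.Quotient.mk_surjective,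
    Submodule.restrictScalars_eq_top_iff]
  exact Ideal.span_singleton_eq_top

theorem setOf_span_singleton_eq_range_eq_image_isUnit {I : Ideal R} {φ : R ⧸ I →ₗ[R] M}
    (hφ : Function.Injective φ) :
    {x : M | Submodule.span R {x} = φ.range} = φ '' {z | IsUnit z} := by
  have span_eq_range_iff (z : R ⧸ I) : Submodule.span R {φ z} = φ.range ↔ IsUnit z := by
    rw [← Set.image_singleton, Submodule.span_image, LinearMap.range_eq_map,
      (Submodule.map_injective_of_injective hφ).eq_iff, span_singleton_quotient_eq_top_iff]
  ext x
  constructor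
  · intro hx
    obtain ⟨z, rfl⟩ : x ∈ φ.range := hx ▸ Submodule.mem_span_singleton_self x
    exact ⟨z, (span_eq_range_iff z).1 hx, rfl⟩
  · rintro ⟨z, hz, rfl⟩
    exact (span_eq_range_iff z).2 hz

theorem ncard_setOf_span_singleton_eq (y : M) :
    {x : M | Submodule.span R {x} = Submodule.span R {y}}.ncard =
      Nat.card (R ⧸ Ideal.torsionOf R M y)ˣ := by
  let φ : R ⧸ Ideal.torsionOf R M y →ₗ[R] M :=
    (Ideal.torsionOf R M y).liftQ (LinearMap.toSpanSingleton R M y) le_rfl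
  have range_φ : φ.range = Submodule.span R {y} :=
    (Submodule.range_liftQ _ _ _).trans (LinearMap.span_singleton_eq_range R M y).symm
  have φ_injective : Function.Injective φ :=
    LinearMap.ker_eq_bot.1 (Submodule.ker_liftQ_eq_bot _ _ _ le_rfl)
  rw [← range_φ, setOf_span_singleton_eq_range_eq_image_isUnit φ_injective,
    Set.ncard_image_of_injective _ φ_injective]
  exact Nat.card_congr Submonoid.unitsTypeEquivIsUnitSubmonoid.toEquiv.symm

end CyclicModule

section DedekindDomain

variable {R : Type*} [CommRing R] [IsDedekindDomain R] {f : Ideal R}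

theorem annihilator_mul_comap_mkQ (N : Submodule R (R ⧸ f)) :
    N.annihilator * N.comap f.mkQ = f := by
  apply le_antisymm
  · refine Ideal.mul_le.2 fun r hr a ha ↦ ?_
    exact (Submodule.Quotient.mk_eq_zero f).1 (Submodule.mem_annihilator.1 hr _ ha)
  · obtain ⟨d, hd⟩ : N.comap f.mkQ ∣ f := Ideal.dvd_iff_le.2 (Submodule.le_comap_mkQ f N)
    have d_le_annihilator : d ≤ N.annihilator := fun r hr ↦ by
      refine Submodule.mem_annihilator.2 fun x hx ↦ ?_
      obtain ⟨a, rfl⟩ := f.mkQ_surjective x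
      refine (Submodule.Quotient.mk_eq_zero f).2 ?_
      rw [hd, mul_comm]
      exact Ideal.mul_mem_mul hr hx
    calc f = d * N.comap f.mkQ := hd.trans (mul_comm _ _)
      _ ≤ N.annihilator * N.comap f.mkQ := Ideal.mul_mono_left d_le_annihilator

theorem annihilator_quotient_injective (hf : f ≠ 0) :
    Function.Injective (Submodule.annihilator : Submodule R (R ⧸ f) → Ideal R) := by
  intro N N' h
  have hN := annihilator_mul_comap_mkQ N
  have annihilator_ne_zero : N.annihilator ≠ 0 := left_ne_zero_of_mul (hN.trans_ne hf)
  apply Submodule.comap_injective_of_surjective f.mkQ_surjective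
  apply mul_left_cancel₀ annihilator_ne_zero
  rw [hN, h, annihilator_mul_comap_mkQ]

theorem torsionOf_quotient_eq_iff (hf : f ≠ 0) {x y : R ⧸ f} :
    Ideal.torsionOf R (R ⧸ f) x = Ideal.torsionOf R (R ⧸ f) y ↔
      Submodule.span R {x} = Submodule.span R {y} := by
  rw [← Ideal.annihilator_span_singleton_eq_torsionOf,
    ← Ideal.annihilator_span_singleton_eq_torsionOf, (annihilator_quotient_injective hf).eq_iff]

theorem exists_comap_mkQ_span_singleton_eq (hf : f ≠ 0) {e : Ideal R} (hfe : f ≤ e) :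
    ∃ x : R ⧸ f, (Submodule.span R {x}).comap f.mkQ = e := by
  obtain ⟨a, ha⟩ := IsDedekindDomain.exists_sup_span_eq hfe hf
  refine ⟨f.mkQ a, ?_⟩
  rwa [← Set.image_singleton, Submodule.span_image, Submodule.comap_map_mkQ]

theorem range_torsionOf_quotient (hf : f ≠ 0) :
    Set.range (Ideal.torsionOf R (R ⧸ f)) = {d | d ∣ f} := by
  ext d
  constructor
  · rintro ⟨x, rfl⟩
    rw [← Ideal.annihilator_span_singleton_eq_torsionOf]
    exact Dvd.intro _ (annihilator_mul_comap_mkQ _)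
  · rintro ⟨e, hde⟩
    have e_ne_zero : e ≠ 0 := right_ne_zero_of_mul (hde.symm.trans_ne hf)
    have f_le_e : f ≤ e := hde ▸ Ideal.mul_le_right
    obtain ⟨x, hx⟩ := exists_comap_mkQ_span_singleton_eq hf f_le_e
    refine ⟨x, mul_right_cancel₀ e_ne_zero ?_⟩
    rw [← hde, ← hx, ← Ideal.annihilator_span_singleton_eq_torsionOf, annihilator_mul_comap_mkQ]

theorem ncard_torsionOf_quotient_fiber (hf : f ≠ 0) {d : Ideal R} (hd : d ∣ f) :
    (Ideal.torsionOf R (R ⧸ f) ⁻¹' {d}).ncard = Nat.card (R ⧸ d)ˣ := by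
  obtain ⟨y, rfl⟩ : d ∈ Set.range (Ideal.torsionOf R (R ⧸ f)) :=
    (range_torsionOf_quotient hf).symm ▸ hd
  rw [← ncard_setOf_span_singleton_eq]
  exact congrArg Set.ncard (Set.ext fun x ↦ torsionOf_quotient_eq_iff hf)

theorem absNorm_eq_sum_totient_general (hf : f ≠ 0) [Finite (R ⧸ f)] :
    Nat.card (R ⧸ f) = ∑ᶠ d ∈ {d : Ideal R | d ≠ 0 ∧ d ∣ f}, Nat.card ((R ⧸ d)ˣ) := by
  have nonzero_divisors_eq : {d : Ideal R | d ≠ 0 ∧ d ∣ f} = {d | d ∣ f} :=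
    Set.ext fun d ↦ and_iff_right_of_imp (ne_zero_of_dvd_ne_zero hf)
  calc Nat.card (R ⧸ f)
      = ∑ᶠ d ∈ {d | d ∣ f}, (Ideal.torsionOf R (R ⧸ f) ⁻¹' {d}).ncard := by
        rw [← range_torsionOf_quotient hf, ← natCard_eq_finsum_ncard_fiber]
    _ = ∑ᶠ d ∈ {d | d ∣ f}, Nat.card ((R ⧸ d)ˣ) :=
        finsum_mem_congr rfl fun d hd ↦ ncard_torsionOf_quotient_fiber hf hd
    _ = ∑ᶠ d ∈ {d : Ideal R | d ≠ 0 ∧ d ∣ f}, Nat.card ((R ⧸ d)ˣ) := by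
        rw [nonzero_divisors_eq]

end DedekindDomain

/-- **Statement 15 (Euler's formula for number fields).** For every nonzero integral
ideal `f` of `𝓞 K`, the absolute norm satisfies
`N(f) = |𝓞 K / f| = Σ_{d ∣ f} φ_K(d)`, where the sum ranges over the (finitely many)
nonzero integral ideals `d` dividing `f` and `φ_K(d) = |(𝓞 K / d)ˣ|`. -/
theorem absNorm_eq_sum_totient (K : Type*) [Field K] [NumberField K]
    (f : Ideal (𝓞 K)) (hf : f ≠ 0) :
    Ideal.absNorm f = Nat.card (𝓞 K ⧸ f) ∧
    Nat.card (𝓞 K ⧸ f) =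
      ∑ᶠ d ∈ {d : Ideal (𝓞 K) | d ≠ 0 ∧ d ∣ f}, Nat.card ((𝓞 K ⧸ d)ˣ) := by
  have := f.finiteQuotientOfFreeOfNeBot hf
  exact ⟨Ideal.absNorm_apply f, absNorm_eq_sum_totient_general hf⟩
end

section
/- Let f be a nonzero integral ideal of O_K and let d be a nonzero integral ideal dividing f. Then the number of residue classes x ∈ O_K/f such that the ideal generated by any (equivalently, some) lift of x together with f has greatest common divisor d (i.e. (lift of x)·O_K + f = d) equals φ_K(f/d) = |(O_K/(f/d))^×|, where f/d is the nonzero integral ideal e with d·e = f. -/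
open NumberField

/-!
In a Dedekind domain `R`, `d = f + (a)` for some `a`. Hence a lift of `x` generates `d` together
with `f` exactly when `x` generates the cyclic submodule `d/f` of `R ⧸ f`. The annihilator of the
class of `a` is `e`, so `d/f ≅ R ⧸ e`, and the generators of the `R`-module `R ⧸ e` are its units.
-/

section CommRing

variable {R M : Type*} [CommRing R] [AddCommGroup M] [Module R M]

theorem span_singleton_quotient_eq_top_iff_isUnit {I : Ideal R} (x : R ⧸ I) :
    Submodule.span R {x} = ⊤ ↔ IsUnit x := by
  rw [← Ideal.span_singleton_eq_top, Ideal.span,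
    ← Submodule.restrictScalars_span R (R ⧸ I) Ideal.Quotient.mk_surjective,
    Submodule.restrictScalars_eq_top_iff]

theorem span_singleton_subtype_eq_top_iff {N : Submodule R M} (x : N) :
    Submodule.span R {x} = ⊤ ↔ Submodule.span R {(x : M)} = N := by
  rw [← (Submodule.map_injective_of_injective N.injective_subtype).eq_iff, Submodule.map_span,
    Set.image_singleton, Submodule.map_subtype_top, Submodule.subtype_apply]

theorem isUnit_iff_span_singleton_quotTorsionOf_eq (m : M) (u : R ⧸ Ideal.torsionOf R M m) :
    IsUnit u ↔
      Submodule.span R {(Ideal.quotTorsionOfEquivSpanSingleton R M m u : M)} =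
        Submodule.span R {m} := by
  let φ := Ideal.quotTorsionOfEquivSpanSingleton R M m
  rw [← span_singleton_subtype_eq_top_iff, ← span_singleton_quotient_eq_top_iff_isUnit,
    ← (Submodule.map_injective_of_injective φ.injective).eq_iff, Submodule.map_span,
    Set.image_singleton, Submodule.map_top, LinearEquiv.range]
  rfl

/-- The units of `R ⧸ Ann m` parametrise the generators of the cyclic module `R ∙ m`, the class of
`r` corresponding to `r • m`. -/
noncomputable def unitsEquivGenerators (m : M) :
    (R ⧸ Ideal.torsionOf R M m)ˣ ≃ {x : M // Submodule.span R {x} = Submodule.span R {m}} :=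
  calc (R ⧸ Ideal.torsionOf R M m)ˣ
    _ ≃ {u : R ⧸ Ideal.torsionOf R M m // IsUnit u} :=
      Submonoid.unitsTypeEquivIsUnitSubmonoid.toEquiv
    _ ≃ {x : Submodule.span R {m} // Submodule.span R {(x : M)} = Submodule.span R {m}} :=
      (Ideal.quotTorsionOfEquivSpanSingleton R M m).toEquiv.subtypeEquiv
        (isUnit_iff_span_singleton_quotTorsionOf_eq m)
    _ ≃ {x : M // Submodule.span R {x} = Submodule.span R {m}} :=
      Equiv.subtypeSubtypeEquivSubtype
        (q := fun x => Submodule.span R {x} = Submodule.span R {m})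
        fun {x} hx => hx ▸ Submodule.mem_span_singleton_self x

theorem span_singleton_mk_eq_iff_sup_eq {I : Ideal R} (y a : R) :
    Submodule.span R {Ideal.Quotient.mk I y} = Submodule.span R {Ideal.Quotient.mk I a} ↔
      I ⊔ Ideal.span {y} = I ⊔ Ideal.span {a} := by
  have comap_span (z : R) :
      (Submodule.span R {Ideal.Quotient.mk I z}).comap I.mkQ = I ⊔ Ideal.span {z} := by
    rw [Ideal.span, ← Submodule.comap_map_mkQ, Submodule.map_span, Set.image_singleton]
    rfl
  rw [← comap_span, ← comap_span,
    (Submodule.comap_injective_of_surjective I.mkQ_surjective).eq_iff]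

theorem forall_lift_span_add_eq_iff {I : Ideal R} (a : R) (x : R ⧸ I) :
    (∀ y : R, Ideal.Quotient.mk I y = x → Ideal.span {y} + I = I ⊔ Ideal.span {a}) ↔
      Submodule.span R {x} = Submodule.span R {Ideal.Quotient.mk I a} := by
  obtain ⟨z, rfl⟩ := Ideal.Quotient.mk_surjective x
  simp_rw [Ideal.add_eq_sup, sup_comm (Ideal.span _) I, ← span_singleton_mk_eq_iff_sup_eq]
  exact ⟨fun h => h z rfl, fun h y hy => hy ▸ h⟩

end CommRing

section Dedekind

variable {R : Type*} [CommRing R] [IsDedekindDomain R]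

theorem torsionOf_mk_mul_eq {d e : Ideal R} (hd : d ≠ 0) {a : R}
    (ha : d * e ⊔ Ideal.span {a} = d) :
    Ideal.torsionOf R (R ⧸ d * e) (Ideal.Quotient.mk (d * e) a) = e := by
  ext r
  calc r ∈ Ideal.torsionOf R (R ⧸ d * e) (Ideal.Quotient.mk (d * e) a)
    _ ↔ a * r ∈ d * e := by
      rw [Ideal.mem_torsionOf_iff, ← Ideal.Quotient.eq_zero_iff_mem, mul_comm a]
      rfl
    _ ↔ (d * e ⊔ Ideal.span {a}) * Ideal.span {r} ≤ d * e := by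
      rw [Ideal.sup_mul, sup_le_iff, and_iff_right Ideal.mul_le_left,
        Ideal.span_singleton_mul_span_singleton, Ideal.span_singleton_le_iff_mem]
    _ ↔ r ∈ e := by
      rw [ha, mul_le_mul_iff_of_pos_left (bot_lt_iff_ne_bot.mpr hd),
        Ideal.span_singleton_le_iff_mem]

/-- Stated with cardinals since `Nat.card` would identify every infinite set with the empty one. -/
theorem card_residues_with_gcd_general (d e f : Ideal R) (hf : f ≠ 0) (hde : d * e = f) :
    Cardinal.mk {x : R ⧸ f //
        ∀ y : R, Ideal.Quotient.mk f y = x → Ideal.span {y} + f = d} =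
      Cardinal.mk (R ⧸ e)ˣ := by
  subst hde
  obtain ⟨a, ha⟩ := IsDedekindDomain.exists_sup_span_eq (Ideal.mul_le_left : d * e ≤ d) hf
  have generators (x : R ⧸ d * e) :
      (∀ y : R, Ideal.Quotient.mk (d * e) y = x → Ideal.span {y} + d * e = d) ↔
        Submodule.span R {x} = Submodule.span R {Ideal.Quotient.mk (d * e) a} := by
    simpa only [ha] using forall_lift_span_add_eq_iff a x
  have annihilator := torsionOf_mk_mul_eq (left_ne_zero_of_mul hf) ha
  have units := Cardinal.mk_congr (unitsEquivGenerators (R := R) (Ideal.Quotient.mk (d * e) a))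
  rw [annihilator] at units
  exact (Cardinal.mk_congr (Equiv.subtypeEquivRight generators)).trans units.symm

end Dedekind

/-- **Statement 17.** Let `f` be a nonzero integral ideal of `𝓞 K` and `d` a nonzero
ideal dividing `f`, say `d·e = f` (so `e = f/d`).  The number of residue classes
`x ∈ 𝓞 K / f` such that the ideal generated by any lift of `x` together with `f` has
gcd `d` (i.e. `(lift of x)·𝓞 K + f = d`) equals `φ_K(f/d) = |(𝓞 K /(f/d))ˣ|`. -/
theorem card_residues_with_gcd (K : Type*) [Field K] [NumberField K]
    (d e f : Ideal (𝓞 K)) (hd : d ≠ 0) (hf : f ≠ 0) (hde : d * e = f) :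
    Nat.card {x : 𝓞 K ⧸ f //
        ∀ y : 𝓞 K, Ideal.Quotient.mk f y = x → Ideal.span {y} + f = d} =
      Nat.card ((𝓞 K ⧸ e)ˣ) :=
  congrArg Cardinal.toNat (card_residues_with_gcd_general d e f hf hde)
end

section
/- Let L be a finite Galois extension of a field K with Galois group G = Gal(L/K), and let Y be a finite set equipped with an action of G. Then the L-linear span, inside the L-vector space of all functions Y → L, of the set of G-equivariant functions (i.e. functions f : Y → L with f(g·y) = g(f(y)) for all g ∈ G and y ∈ Y) is the space of all functions Y → L. -/
/-!
The functions `Y → L` carry the semilinear action `(g • f) y = g • f (g⁻¹ • y)`, whose fixed points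
are the equivariant functions, so the claim is an instance of Galois descent. For descent, a linear
functional `φ` vanishing on the fixed vectors kills every trace `∑ g, g • (a • v)`, that is,
`∑ g, φ (g • v) * (g • a) = 0` for all scalars `a`. Dedekind's independence of the automorphisms
`a ↦ g • a` forces `φ (g • v) = 0` for all `g`; the case `g = 1` gives `φ = 0`.
-/

section Dedekind

variable (G L : Type*) [Monoid G] [CommRing L] [IsDomain L] [MulDistribMulAction G L]
  [FaithfulSMul G L]

theorem linearIndependent_smul_of_faithfulSMul :
    LinearIndependent L (fun (g : G) (a : L) ↦ g • a) :=
  (linearIndependent_monoidHom L L).comp (MulDistribMulAction.toMonoidHom L)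
    fun _ _ h ↦ eq_of_smul_eq_smul fun a : L ↦ DFunLike.congr_fun h a

end Dedekind

section GaloisDescent

variable {G V : Type*} [Group G]

theorem apply_sum_orbit_eq_self [Fintype G] [AddCommMonoid V] (ρ : G →* AddMonoid.End V)
    (h : G) (v : V) : ρ h (∑ g, ρ g v) = ∑ g, ρ g v :=
  calc
    ρ h (∑ g, ρ g v) = ∑ g, ρ (h * g) v := by
      simp only [map_sum, map_mul, AddMonoid.End.coe_mul, Function.comp_apply]
    _ = ∑ g, ρ g v := Equiv.sum_comp (Equiv.mulLeft h) fun g ↦ ρ g v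

variable {L : Type*} [Finite G]

theorem eq_zero_of_forall_fixed_apply_eq_zero [CommRing L] [IsDomain L] [MulDistribMulAction G L]
    [FaithfulSMul G L] [AddCommMonoid V] [Module L V] (ρ : G →* AddMonoid.End V)
    (hρ : ∀ (g : G) (a : L) (v : V), ρ g (a • v) = (g • a) • ρ g v) (φ : V →ₗ[L] L)
    (hφ : ∀ v, (∀ g, ρ g v = v) → φ v = 0) : φ = 0 := by
  have := Fintype.ofFinite G
  ext v
  have trace_eq_zero (a : L) : ∑ g, φ (ρ g v) * (g • a) = 0 :=
    calc
      ∑ g, φ (ρ g v) * (g • a) = φ (∑ g, ρ g (a • v)) := by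
        simp only [hρ, map_sum, map_smul, smul_eq_mul, mul_comm]
      _ = 0 := hφ _ fun h ↦ apply_sum_orbit_eq_self ρ h (a • v)
  have coeff_eq_zero : ∀ g, φ (ρ g v) = 0 :=
    Fintype.linearIndependent_iff.mp (linearIndependent_smul_of_faithfulSMul G L) _ <| by
      ext a
      simpa only [Finset.sum_apply, Pi.smul_apply, smul_eq_mul, Pi.zero_apply] using trace_eq_zero a
  simpa only [map_one, AddMonoid.End.coe_one, id_eq, LinearMap.zero_apply] using coeff_eq_zero 1

theorem span_fixed_eq_top_of_semilinear [Field L] [MulSemiringAction G L] [FaithfulSMul G L]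
    [AddCommGroup V] [Module L V] (ρ : G →* AddMonoid.End V)
    (hρ : ∀ (g : G) (a : L) (v : V), ρ g (a • v) = (g • a) • ρ g v) :
    Submodule.span L {v : V | ∀ g, ρ g v = v} = ⊤ := by
  by_contra hne
  obtain ⟨φ, hφ, hle⟩ := Submodule.exists_le_ker_of_lt_top _ (lt_top_iff_ne_top.mpr hne)
  exact hφ <| eq_zero_of_forall_fixed_apply_eq_zero ρ hρ φ fun _ hv ↦
    hle (Submodule.subset_span hv)

end GaloisDescent

section TwistedTranslation

variable (G Y A : Type*) [Group G] [MulAction G Y] [AddMonoid A] [DistribMulAction G A]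

/-- The action of `G` on functions `Y → A` by transport of structure along the actions on `Y` and
`A`. It is a homomorphism and not an instance because `Y → A` already carries the pointwise action
of `G`. -/
def twistedTranslation : G →* AddMonoid.End (Y → A) where
  toFun g :=
    { toFun := fun f y ↦ g • f (g⁻¹ • y)
      map_zero' := by ext; simp
      map_add' := fun _ _ ↦ by ext; simp }
  map_one' := by
    ext f y
    change (1 : G) • f ((1 : G)⁻¹ • y) = f y
    rw [inv_one, one_smul, one_smul]
  map_mul' g h := by
    ext f y
    change (g * h) • f ((g * h)⁻¹ • y) = g • h • f (h⁻¹ • g⁻¹ • y)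
    rw [mul_inv_rev, mul_smul, mul_smul]

variable {G Y A}

@[simp]
theorem twistedTranslation_apply (g : G) (f : Y → A) (y : Y) :
    twistedTranslation G Y A g f y = g • f (g⁻¹ • y) :=
  rfl

theorem forall_twistedTranslation_eq_self_iff {f : Y → A} :
    (∀ g, twistedTranslation G Y A g f = f) ↔ ∀ (g : G) (y : Y), f (g • y) = g • f y := by
  refine ⟨fun hf g y ↦ ?_, fun hf g ↦ ?_⟩
  · simpa only [twistedTranslation_apply, inv_smul_smul] using (congrFun (hf g) (g • y)).symm
  · ext y
    rw [twistedTranslation_apply, ← hf, smul_inv_smul]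

end TwistedTranslation

theorem span_equivariant_functions_eq_top_general
    (G L Y : Type*) [Group G] [Finite G] [Field L] [MulSemiringAction G L] [FaithfulSMul G L]
    [MulAction G Y] :
    Submodule.span L {f : Y → L | ∀ (g : G) (y : Y), f (g • y) = g • f y} = ⊤ := by
  have twistedTranslation_smul (g : G) (a : L) (f : Y → L) :
      twistedTranslation G Y L g (a • f) = (g • a) • twistedTranslation G Y L g f := by
    ext y
    exact smul_mul' g a (f (g⁻¹ • y))
  simpa only [forall_twistedTranslation_eq_self_iff] using
    span_fixed_eq_top_of_semilinear (twistedTranslation G Y L) twistedTranslation_smul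

/-- **Statement 18.** Let `L/K` be a finite Galois extension with Galois group
`G = Gal(L/K)` and let `Y` be a finite `G`-set.  Then the `L`-linear span, inside the
`L`-vector space of all functions `Y → L`, of the `G`-equivariant functions
(those `f : Y → L` with `f (g • y) = g (f y)` for all `g ∈ G`, `y ∈ Y`) is the space of
all functions `Y → L`. -/
theorem span_equivariant_functions_eq_top
    (K L : Type*) [Field K] [Field L] [Algebra K L] [FiniteDimensional K L]
    [IsGalois K L] (Y : Type*) [Finite Y] [MulAction (L ≃ₐ[K] L) Y] :
    Submodule.span L
        {f : Y → L | ∀ (g : L ≃ₐ[K] L) (y : Y), f (g • y) = g (f y)} = ⊤ :=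
  span_equivariant_functions_eq_top_general (L ≃ₐ[K] L) L Y
end
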